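/- arXiv:2103.06468 — 2 statements merged into one kernel-verified Lean document; each statement's English description precedes it below -/
import Mathlib

section
/- Let H be a simple r-uniform r-partite hypergraph and I = I(H) its edge ideal. Then the Waldschmidt constant of I equals r, i.e., lim_{m→∞} α(I^(m))/m = r, where α(J) denotes the least degree of a nonzero element of J. -/
open MvPolynomial

noncomputable def symbolicPower {R : Type*} [CommRing R] (I : Ideal R) (n : ℕ) : Ideal R :=
  sInf { J : Ideal R | ∃ (p : Ideal R) (hp : p.IsPrime),
    p ∈ associatedPrimes R (R ⧸ I) ∧
    J = Ideal.comap (algebraMap R (Localization (@Ideal.primeCompl R _ p hp)))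
        (Ideal.map (algebraMap R (Localization (@Ideal.primeCompl R _ p hp))) (I ^ n)) }

noncomputable def edgeIdeal (k : Type*) {V : Type*} [CommRing k] [DecidableEq V]
    (E : Finset (Finset V)) : Ideal (MvPolynomial V k) :=
  Ideal.span ((fun e : Finset V => ∏ x ∈ e, (X x : MvPolynomial V k)) '' ↑E)

/-- least degree of a nonzero element of an ideal of polynomials -/
noncomputable def alphaIdeal {k V : Type*} [CommRing k] (J : Ideal (MvPolynomial V k)) : ℕ :=
  sInf { d : ℕ | ∃ f ∈ J, f ≠ 0 ∧ f.totalDegree = d }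

/-- The order of a polynomial along the coordinate subspace where the variables in `C` vanish:
the least degree in these variables of a monomial that occurs. -/
noncomputable def orderAlong {k V : Type*} [CommRing k] (C : Set V) (f : MvPolynomial V k) : ℕ∞ :=
  (f : MvPowerSeries V k).weightedOrder (C.indicator 1)

section OrderAlong

variable {k V : Type*}

theorem le_orderAlong_iff [CommRing k] {C : Set V} {f : MvPolynomial V k} {n : ℕ} :
    (n : ℕ∞) ≤ orderAlong C f ↔ ∀ d ∈ f.support, n ≤ Finsupp.weight (C.indicator 1) d := by
  constructor
  · intro h d hd
    have := MvPowerSeries.weightedOrder_le (C.indicator 1 : V → ℕ)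
      (f := (f : MvPowerSeries V k)) (d := d) (by simpa using hd)
    exact_mod_cast h.trans this
  · intro h
    refine MvPowerSeries.nat_le_weightedOrder _ fun d hd => ?_
    by_contra hne
    exact absurd (h d (by simpa using hne)) (not_le.mpr hd)

theorem orderAlong_mul [CommRing k] [NoZeroDivisors k] (C : Set V) (f g : MvPolynomial V k) :
    orderAlong C (f * g) = orderAlong C f + orderAlong C g := by
  simp [orderAlong, MvPowerSeries.weightedOrder_mul]

theorem mem_span_X_image_iff_one_le_orderAlong [CommRing k] {C : Set V} {f : MvPolynomial V k} :
    f ∈ Ideal.span (X '' C : Set (MvPolynomial V k)) ↔ 1 ≤ orderAlong C f := by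
  rw [mem_ideal_span_X_image, ← Nat.cast_one, le_orderAlong_iff]
  refine forall₂_congr fun d _ => ?_
  rw [Nat.one_le_iff_ne_zero, Finsupp.weight_apply, Finsupp.sum, ne_eq, Finset.sum_eq_zero_iff]
  simp only [Finsupp.mem_support_iff, smul_eq_mul, mul_eq_zero, Set.indicator_apply_eq_zero]
  push Not
  simp only [Pi.one_apply, ne_eq, one_ne_zero, not_false_eq_true, and_true]
  exact exists_congr fun i => by tauto

theorem le_orderAlong_of_mem_span_X_image_pow [CommRing k] [NoZeroDivisors k] {C : Set V}
    {n : ℕ} {f : MvPolynomial V k} (hf : f ∈ Ideal.span (X '' C : Set (MvPolynomial V k)) ^ n) :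
    (n : ℕ∞) ≤ orderAlong C f := by
  induction n generalizing f with
  | zero => simp
  | succ n ih =>
    rw [pow_succ] at hf
    refine Submodule.mul_induction_on hf (fun a ha b hb => ?_) fun a b ha hb => ?_
    · rw [orderAlong_mul, Nat.cast_succ]
      exact add_le_add (ih ha) (mem_span_X_image_iff_one_le_orderAlong.mp hb)
    · refine (le_min ha hb).trans ?_
      simpa [orderAlong] using MvPowerSeries.min_weightedOrder_le_add (C.indicator 1 : V → ℕ)
        (f := (a : MvPowerSeries V k)) (g := (b : MvPowerSeries V k))

theorem isPrime_span_X_image [Field k] (C : Set V) :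
    (Ideal.span (X '' C : Set (MvPolynomial V k))).IsPrime := by
  refine ⟨fun h => ?_, fun {a b} hab => ?_⟩
  · have h1 : (1 : MvPolynomial V k) ∈ Ideal.span (X '' C : Set (MvPolynomial V k)) :=
      h ▸ Submodule.mem_top
    rw [mem_span_X_image_iff_one_le_orderAlong, orderAlong, coe_one,
      MvPowerSeries.weightedOrder_one] at h1
    simp at h1
  · simp only [mem_span_X_image_iff_one_le_orderAlong, orderAlong_mul,
      Order.one_le_iff_ne_zero] at hab ⊢
    by_contra! h
    exact hab (by rw [h.1, h.2, add_zero])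

end OrderAlong

theorem exists_notMem_mul_mem_pow_of_mem_symbolicPower {R : Type*} [CommRing R]
    [IsNoetherianRing R] {I p : Ideal R} (hp : p ∈ I.minimalPrimes) {n : ℕ} {f : R}
    (hf : f ∈ symbolicPower I n) : ∃ s ∉ p, s * f ∈ I ^ n := by
  have hprime : p.IsPrime := hp.1.1
  have hass : p ∈ associatedPrimes R (R ⧸ I) :=
    Module.associatedPrimes.minimalPrimes_annihilator_subset_associatedPrimes R (R ⧸ I)
      (by rwa [Ideal.annihilator_quotient])
  have h := (Submodule.mem_sInf.mp hf) _ ⟨p, hprime, hass, rfl⟩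
  rw [Ideal.mem_comap, IsLocalization.algebraMap_mem_map_algebraMap_iff p.primeCompl] at h
  exact h

theorem pow_le_symbolicPower {R : Type*} [CommRing R] (I : Ideal R) (n : ℕ) :
    I ^ n ≤ symbolicPower I n := by
  refine le_sInf ?_
  rintro J ⟨p, hp, -, rfl⟩
  exact Ideal.le_comap_map

/-- If every edge meets `A` in exactly one vertex, then the non-isolated vertices of `A` form a
minimal vertex cover, and so generate a minimal prime of the edge ideal. -/
theorem span_X_image_mem_minimalPrimes_edgeIdeal {k V : Type*} [Field k] [DecidableEq V]
    {E : Finset (Finset V)} {A : Finset V} (hA : ∀ e ∈ E, (e ∩ A).card = 1) :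
    Ideal.span (X '' {v | v ∈ A ∧ ∃ e ∈ E, v ∈ e} : Set (MvPolynomial V k)) ∈
      (edgeIdeal k E).minimalPrimes := by
  refine ⟨⟨isPrime_span_X_image _, ?_⟩, ?_⟩
  · rw [edgeIdeal, Ideal.span_le]
    rintro _ ⟨e, he, rfl⟩
    obtain ⟨v, hv⟩ := Finset.card_eq_one.mp (hA e he)
    have hve : v ∈ e ∩ A := hv ▸ Finset.mem_singleton_self v
    rw [Finset.mem_inter] at hve
    exact Ideal.mem_of_dvd _ (Finset.dvd_prod_of_mem _ hve.1)
      (Ideal.subset_span ⟨v, ⟨hve.2, e, he, hve.1⟩, rfl⟩)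
  · rintro q ⟨hq, hIq⟩ hqp
    rw [Ideal.span_le]
    rintro _ ⟨v, ⟨hvA, e, he, hve⟩, rfl⟩
    obtain ⟨w, hwe, hwq⟩ := hq.prod_mem_iff.mp (hIq (Ideal.subset_span ⟨e, he, rfl⟩))
    obtain ⟨u, hu, huw⟩ := mem_ideal_span_X_image.mp (hqp hwq) (Finsupp.single w 1)
      (by simp [support_X])
    obtain rfl : w = u := by
      by_contra hne
      exact huw (Finsupp.single_eq_of_ne (Ne.symm hne))
    obtain rfl : v = w := Finset.card_le_one.mp (hA e he).le v (Finset.mem_inter.mpr ⟨hve, hvA⟩)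
      w (Finset.mem_inter.mpr ⟨hwe, hu.1⟩)
    exact hwq

theorem le_sum_of_mem_symbolicPower_edgeIdeal {k V : Type*} [Field k] [Finite V] [DecidableEq V]
    {E : Finset (Finset V)} {A : Finset V} (hA : ∀ e ∈ E, (e ∩ A).card = 1) {m : ℕ}
    {f : MvPolynomial V k} (hf : f ∈ symbolicPower (edgeIdeal k E) m) {d : V →₀ ℕ}
    (hd : d ∈ f.support) : m ≤ ∑ v ∈ A, d v := by
  have hmin := span_X_image_mem_minimalPrimes_edgeIdeal (k := k) hA
  obtain ⟨s, hs, hsf⟩ := exists_notMem_mul_mem_pow_of_mem_symbolicPower hmin hf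
  have h := le_orderAlong_of_mem_span_X_image_pow (Ideal.pow_right_mono hmin.1.2 m hsf)
  rw [mem_span_X_image_iff_one_le_orderAlong, Order.one_le_iff_ne_zero, not_not] at hs
  rw [orderAlong_mul, hs, zero_add, le_orderAlong_iff] at h
  refine (h d hd).trans ?_
  classical
  rw [Finsupp.weight_apply, Finsupp.sum, ← Finset.sum_filter_add_sum_filter_not _ (· ∈ A),
    Finset.sum_eq_zero (s := {x ∈ d.support | x ∉ A}), add_zero]
  · refine (Finset.sum_le_sum fun v _ => ?_).trans
      (Finset.sum_le_sum_of_subset fun v hv => (Finset.mem_filter.mp hv).2)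
    rw [smul_eq_mul]
    exact mul_le_of_le_one_right' (Set.indicator_le_self' (by simp) v)
  · intro v hv
    have : v ∉ A := (Finset.mem_filter.mp hv).2
    simp [this]

theorem alphaIdeal_symbolicPower_edgeIdeal {k V : Type*} [Field k] [Fintype V] [DecidableEq V]
    {r : ℕ} {E : Finset (Finset V)} (hE : E.Nonempty) (huniform : ∀ e ∈ E, e.card = r)
    {Xp : Fin r → Finset V} (hdisj : Pairwise fun i j => Disjoint (Xp i) (Xp j))
    (hpartite : ∀ e ∈ E, ∀ i, (e ∩ Xp i).card = 1) (m : ℕ) :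
    alphaIdeal (symbolicPower (edgeIdeal k E) m) = r * m := by
  refine IsLeast.csInf_eq ⟨?_, ?_⟩
  · obtain ⟨e, he⟩ := hE
    have hmem : ∏ x ∈ e, (X x : MvPolynomial V k) ∈ edgeIdeal k E :=
      Ideal.subset_span ⟨e, he, rfl⟩
    have hne : (∏ x ∈ e, (X x : MvPolynomial V k)) ^ m ≠ 0 :=
      pow_ne_zero _ (Finset.prod_ne_zero_iff.mpr fun x _ => X_ne_zero x)
    refine ⟨_, pow_le_symbolicPower _ _ (Ideal.pow_mem_pow hmem m), hne, ?_⟩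
    have hhom : (∏ x ∈ e, (X x : MvPolynomial V k)).IsHomogeneous (∑ _x ∈ e, 1) :=
      IsHomogeneous.prod _ _ _ fun x _ => isHomogeneous_X k x
    rw [(hhom.pow m).totalDegree hne]
    simp [huniform e he]
  · rintro _ ⟨f, hf, hf0, rfl⟩
    obtain ⟨d, hd⟩ := support_nonempty.mpr hf0
    calc r * m = ∑ _i : Fin r, m := by simp
      _ ≤ ∑ i, ∑ v ∈ Xp i, d v := Finset.sum_le_sum fun i _ =>
          le_sum_of_mem_symbolicPower_edgeIdeal (fun e he => hpartite e he i) hf hd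
      _ = ∑ v ∈ Finset.univ.biUnion Xp, d v :=
          (Finset.sum_biUnion fun i _ j _ hij => hdisj hij).symm
      _ ≤ ∑ v, d v := Finset.sum_le_sum_of_subset (Finset.subset_univ _)
      _ = d.sum fun _ n => n := (Finsupp.sum_fintype d (fun _ n => n) fun _ => rfl).symm
      _ ≤ f.totalDegree := le_totalDegree hd

/-- the Waldschmidt constant of the edge ideal of a simple r-uniform
r-partite hypergraph equals r. -/
theorem stmt1 {k V : Type*} [Field k] [Fintype V] [DecidableEq V]
    (r : ℕ) (hr : 1 ≤ r) (E : Finset (Finset V)) (hE : E.Nonempty)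
    (huniform : ∀ e ∈ E, e.card = r)
    (Xp : Fin r → Finset V)
    (hdisj : Pairwise fun i j => Disjoint (Xp i) (Xp j))
    (hcover : ∀ v : V, ∃ i, v ∈ Xp i)
    (hpartite : ∀ e ∈ E, ∀ i, (e ∩ Xp i).card = 1) :
    Filter.Tendsto
      (fun m : ℕ => (alphaIdeal (symbolicPower (edgeIdeal k E) m) : ℝ) / m)
      Filter.atTop (nhds (r : ℝ)) := by
  refine tendsto_const_nhds.congr' ?_
  filter_upwards [Filter.eventually_ne_atTop 0] with m hm
  rw [alphaIdeal_symbolicPower_edgeIdeal hE huniform hdisj hpartite, Nat.cast_mul,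
    mul_div_cancel_right₀ _ (Nat.cast_ne_zero.mpr hm)]
end

section
/- Let H be a simple 3-uniform 3-partite hypergraph with edge ideal I = I(H). If H contains no bad subhypergraph of length 3, then I^(2) = I^2. -/
open MvPolynomial

/-- three hyperedges forming a bad subhypergraph of length 3: pairwise distinct,
pairwise intersecting in exactly one vertex, with the three intersection vertices
pairwise distinct. -/
def BadTriple {V : Type*} [DecidableEq V] (E : Finset (Finset V))
    (e₁ e₂ e₃ : Finset V) : Prop :=
  e₁ ∈ E ∧ e₂ ∈ E ∧ e₃ ∈ E ∧ e₁ ≠ e₂ ∧ e₂ ≠ e₃ ∧ e₁ ≠ e₃ ∧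
  (e₁ ∩ e₂).card = 1 ∧ (e₂ ∩ e₃).card = 1 ∧ (e₁ ∩ e₃).card = 1 ∧
  e₁ ∩ e₂ ≠ e₂ ∩ e₃ ∧ e₂ ∩ e₃ ≠ e₁ ∩ e₃ ∧ e₁ ∩ e₂ ≠ e₁ ∩ e₃

/-- The total exponent of a monomial in the variables of `C`. -/
def degreeIn {V : Type*} (C : Finset V) (b : V →₀ ℕ) : ℕ := ∑ v ∈ C, b v

/-- The algebra map scaling the variables in `C` by a new variable; the order of the image at zero
is the order of vanishing along the prime generated by the variables in `C`. -/
noncomputable def scaleVars (k : Type*) {V : Type*} [CommRing k] [DecidableEq V] (C : Finset V) :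
    MvPolynomial V k →ₐ[k] Polynomial (MvPolynomial V k) :=
  aeval fun v => (if v ∈ C then Polynomial.X else 1) * Polynomial.C (X v)

section

variable {k V : Type*} [CommRing k] [DecidableEq V]

lemma scaleVars_monomial [Finite V] (C : Finset V) (b : V →₀ ℕ) (r : k) :
    scaleVars k C (monomial b r) = Polynomial.X ^ degreeIn C b * Polynomial.C (monomial b r) := by
  have := Fintype.ofFinite V
  have hb : (monomial b r : MvPolynomial V k) = MvPolynomial.C r * ∏ v, X v ^ b v := by
    rw [monomial_eq, Finsupp.prod_fintype _ _ (by simp)]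
  have hC : scaleVars k C (MvPolynomial.C r) = Polynomial.C (MvPolynomial.C r) := by
    rw [← MvPolynomial.algebraMap_eq, AlgHom.commutes]; rfl
  have hX (v : V) : scaleVars k C (X v) =
      (if v ∈ C then Polynomial.X else 1) * Polynomial.C (X v) := by
    simp [scaleVars]
  rw [hb]
  simp only [map_mul, map_prod, map_pow, hC, hX, mul_pow, Finset.prod_mul_distrib, ite_pow,
    one_pow, Finset.prod_ite_mem, Finset.univ_inter, Finset.prod_pow_eq_pow_sum, degreeIn]
  ring

lemma coeff_scaleVars [Finite V] (C : Finset V) (f : MvPolynomial V k) (n : ℕ) (b : V →₀ ℕ) :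
    ((scaleVars k C f).coeff n).coeff b = if degreeIn C b = n then f.coeff b else 0 := by
  induction f using MvPolynomial.induction_on' with
  | monomial a r =>
    rw [scaleVars_monomial, Polynomial.coeff_X_pow_mul']
    rcases eq_or_ne a b with rfl | hab
    · split_ifs with h₁ h₂ h₂
      · simp [h₂]
      · rw [Polynomial.coeff_C_of_ne_zero (by omega), coeff_zero]
      · omega
      · simp
    · rw [coeff_monomial, if_neg hab, ite_self]
      split_ifs with h₁
      · rw [Polynomial.coeff_C]
        split_ifs <;> simp [hab]
      · simp
  | add p q hp hq =>
    rw [map_add, Polynomial.coeff_add, coeff_add, hp, hq, coeff_add]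
    split_ifs <;> simp

lemma X_pow_dvd_scaleVars_iff [Finite V] (C : Finset V) (f : MvPolynomial V k) (n : ℕ) :
    Polynomial.X ^ n ∣ scaleVars k C f ↔ ∀ b, f.coeff b ≠ 0 → n ≤ degreeIn C b := by
  rw [Polynomial.X_pow_dvd_iff]
  constructor
  · intro h b hb
    by_contra! hlt
    have := coeff_scaleVars C f (degreeIn C b) b
    rw [h _ hlt, if_pos rfl, coeff_zero] at this
    exact hb this.symm
  · intro h d hd
    ext b
    rw [coeff_scaleVars, coeff_zero]
    split_ifs with hbd
    · by_contra hb
      exact absurd (h b hb) (by omega)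
    · rfl

/-- The ideal generated by the variables in `C`, as the polynomials whose scaling is divisible by
the new variable. -/
noncomputable def varIdeal (k : Type*) {V : Type*} [CommRing k] [DecidableEq V] (C : Finset V) :
    Ideal (MvPolynomial V k) :=
  (Ideal.span {Polynomial.X}).comap (scaleVars k C)

lemma mem_varIdeal {C : Finset V} {f : MvPolynomial V k} :
    f ∈ varIdeal k C ↔ Polynomial.X ∣ scaleVars k C f := by
  rw [varIdeal, Ideal.mem_comap, Ideal.mem_span_singleton]

lemma varIdeal_isPrime [IsDomain k] (C : Finset V) : (varIdeal k C).IsPrime := by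
  have : (Ideal.span {(Polynomial.X : Polynomial (MvPolynomial V k))}).IsPrime :=
    (Ideal.span_singleton_prime Polynomial.X_ne_zero).2 Polynomial.prime_X
  exact Ideal.comap_isPrime _ _

lemma X_mem_varIdeal_iff [IsDomain k] {C : Finset V} {v : V} :
    (X v : MvPolynomial V k) ∈ varIdeal k C ↔ v ∈ C := by
  rw [mem_varIdeal, scaleVars, aeval_X]
  split_ifs with h
  · simp [h]
  · simp [h, Polynomial.X_dvd_iff]

lemma varIdeal_le [Finite V] {C : Finset V} {q : Ideal (MvPolynomial V k)}
    (h : ∀ v ∈ C, X v ∈ q) : varIdeal k C ≤ q := by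
  intro f hf
  rw [mem_varIdeal, ← pow_one Polynomial.X, X_pow_dvd_scaleVars_iff] at hf
  rw [← support_sum_monomial_coeff f]
  refine Ideal.sum_mem _ fun b hb => ?_
  have hdeg := hf b (mem_support_iff.1 hb)
  obtain ⟨v, hv, hbv⟩ : ∃ v ∈ C, b v ≠ 0 := by
    by_contra! h0
    rw [degreeIn, Finset.sum_eq_zero h0] at hdeg
    omega
  refine q.mem_of_dvd ?_ (h v hv)
  exact X_dvd_monomial.2 (Or.inr hbv)

lemma edgeIdeal_le_varIdeal [IsDomain k] {E : Finset (Finset V)} {C : Finset V}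
    (hC : ∀ e ∈ E, ∃ v ∈ e, v ∈ C) : edgeIdeal k E ≤ varIdeal k C := by
  rw [edgeIdeal, Ideal.span_le]
  rintro _ ⟨e, he, rfl⟩
  obtain ⟨v, hve, hvC⟩ := hC e he
  exact Ideal.mem_of_dvd _ (Finset.dvd_prod_of_mem _ hve) (X_mem_varIdeal_iff.2 hvC)

/-- A minimal prime of the edge ideal is generated by the variables of a vertex cover. -/
lemma exists_cover_of_mem_minimalPrimes [IsDomain k] [Fintype V] {E : Finset (Finset V)}
    {q : Ideal (MvPolynomial V k)} (hq : q ∈ (edgeIdeal k E).minimalPrimes) :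
    ∃ C : Finset V, (∀ e ∈ E, ∃ v ∈ e, v ∈ C) ∧ q = varIdeal k C := by
  classical
  have hprime : q.IsPrime := hq.1.1
  let C : Finset V := {v | (X v : MvPolynomial V k) ∈ q}
  have hC : ∀ e ∈ E, ∃ v ∈ e, v ∈ C := by
    intro e he
    have hmem : ∏ x ∈ e, (X x : MvPolynomial V k) ∈ q :=
      hq.1.2 (Ideal.subset_span ⟨e, he, rfl⟩)
    obtain ⟨v, hv, hvq⟩ := hprime.prod_mem_iff.1 hmem
    exact ⟨v, hv, by simpa [C] using hvq⟩
  have hle : varIdeal k C ≤ q := varIdeal_le fun v hv => by simpa [C] using hv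
  exact ⟨C, hC, le_antisymm (hq.2 ⟨varIdeal_isPrime C, edgeIdeal_le_varIdeal hC⟩ hle) hle⟩

lemma X_pow_dvd_scaleVars_of_mem_pow {C : Finset V} {I : Ideal (MvPolynomial V k)}
    (hI : I ≤ varIdeal k C) {n : ℕ} {f : MvPolynomial V k} (hf : f ∈ I ^ n) :
    Polynomial.X ^ n ∣ scaleVars k C f := by
  rw [← Ideal.mem_span_singleton, ← Ideal.span_singleton_pow]
  exact Ideal.le_comap_pow _ n (Ideal.pow_right_mono hI n hf)

/-- Membership in a symbolic power of an edge ideal bounds below the degree of every monomial in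
the variables of any vertex cover. -/
lemma le_degreeIn_of_mem_symbolicPower {k : Type*} [Field k] [Fintype V] {E : Finset (Finset V)}
    {n : ℕ} {f : MvPolynomial V k} (hf : f ∈ symbolicPower (edgeIdeal k E) n) {C : Finset V}
    (hC : ∀ e ∈ E, ∃ v ∈ e, v ∈ C) {b : V →₀ ℕ} (hb : f.coeff b ≠ 0) : n ≤ degreeIn C b := by
  have := varIdeal_isPrime (k := k) C
  obtain ⟨q, hq, hqC⟩ := Ideal.exists_minimalPrimes_le (edgeIdeal_le_varIdeal (k := k) hC)
  have hqp : q.IsPrime := hq.1.1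
  obtain ⟨D, -, rfl⟩ := exists_cover_of_mem_minimalPrimes hq
  have hDC : D ⊆ C := fun v hv => X_mem_varIdeal_iff.1 (hqC (X_mem_varIdeal_iff.2 hv))
  have hass : varIdeal k D ∈ associatedPrimes (MvPolynomial V k)
      (MvPolynomial V k ⧸ edgeIdeal k E) := by
    apply Module.associatedPrimes.minimalPrimes_annihilator_subset_associatedPrimes
    rwa [Ideal.annihilator_quotient]
  have hmem := Submodule.mem_sInf.1 hf _ ⟨varIdeal k D, hqp, hass, rfl⟩
  rw [Ideal.mem_comap, IsLocalization.algebraMap_mem_map_algebraMap_iff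
    (varIdeal k D).primeCompl] at hmem
  obtain ⟨s, hs, hsf⟩ := hmem
  have hdvd := X_pow_dvd_scaleVars_of_mem_pow hq.1.2 hsf
  rw [map_mul] at hdvd
  have hdvd' := Polynomial.prime_X.pow_dvd_of_dvd_mul_left n (fun h => hs (mem_varIdeal.2 h)) hdvd
  exact ((X_pow_dvd_scaleVars_iff D f n).1 hdvd' b hb).trans (Finset.sum_le_sum_of_subset hDC)

lemma monomial_mem_edgeIdeal_sq {E : Finset (Finset V)} {e f : Finset V} (he : e ∈ E) (hf : f ∈ E)
    {a : V →₀ ℕ} (h : ∀ v, (if v ∈ e then 1 else 0) + (if v ∈ f then 1 else 0) ≤ a v) (r : k) :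
    monomial a r ∈ edgeIdeal k E ^ 2 := by
  have hprod (e : Finset V) : ∏ x ∈ e, (X x : MvPolynomial V k) =
      monomial (∑ x ∈ e, Finsupp.single x 1) 1 := by
    rw [monomial_sum_one]; rfl
  have hmem : (∏ x ∈ e, X x) * (∏ x ∈ f, X x) ∈ edgeIdeal k E ^ 2 := by
    rw [sq]
    exact Ideal.mul_mem_mul (Ideal.subset_span ⟨e, he, rfl⟩) (Ideal.subset_span ⟨f, hf, rfl⟩)
  refine Ideal.mem_of_dvd _ ?_ hmem
  rw [hprod, hprod, monomial_mul, one_mul, monomial_dvd_monomial]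
  refine ⟨Or.inr fun v => ?_, one_dvd _⟩
  simpa [Finsupp.finsetSum_apply, Finsupp.single_apply] using h v

end

section

variable {V : Type*} [DecidableEq V] {E : Finset (Finset V)} {c : V → Fin 3}

/-- In a 3-partite hypergraph without bad triples, vertices common to the pairs of a triple of
edges can be replaced by a vertex common to all three. -/
lemma exists_common_of_pairwise (hinj : ∀ e ∈ E, Set.InjOn c e)
    (hnobad : ¬ ∃ e₁ e₂ e₃ : Finset V, BadTriple E e₁ e₂ e₃) {e₁ e₂ e₃ : Finset V}
    (h₁ : e₁ ∈ E) (h₂ : e₂ ∈ E) (h₃ : e₃ ∈ E) {T : Set V}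
    (h₁₂ : ∃ v ∈ e₁, v ∈ e₂ ∧ v ∈ T) (h₂₃ : ∃ v ∈ e₂, v ∈ e₃ ∧ v ∈ T)
    (h₁₃ : ∃ v ∈ e₁, v ∈ e₃ ∧ v ∈ T) : ∃ v ∈ e₁, v ∈ e₂ ∧ v ∈ e₃ ∧ v ∈ T := by
  obtain ⟨x, hx₁, hx₂, hxT⟩ := h₁₂
  obtain ⟨y, hy₂, hy₃, hyT⟩ := h₂₃
  obtain ⟨z, hz₁, hz₃, hzT⟩ := h₁₃
  by_contra! hno
  have hx₃ : x ∉ e₃ := fun h => hno x hx₁ hx₂ h hxT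
  have hy₁ : y ∉ e₁ := fun h => hno y h hy₂ hy₃ hyT
  have hz₂ : z ∉ e₂ := fun h => hno z hz₁ h hz₃ hzT
  have hcxy : c x ≠ c y := fun h => hx₃ (hinj _ h₂ hx₂ hy₂ h ▸ hy₃)
  have hcyz : c y ≠ c z := fun h => hz₂ (hinj _ h₃ hy₃ hz₃ h ▸ hy₂)
  have hcxz : c x ≠ c z := fun h => hx₃ (hinj _ h₁ hx₁ hz₁ h ▸ hz₃)
  have hcol (u : V) : c u = c x ∨ c u = c y ∨ c u = c z := by omega
  have e₁₂ : e₁ ∩ e₂ = {x} := by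
    refine Finset.eq_singleton_iff_unique_mem.2 ⟨by simp [hx₁, hx₂], fun u hu => ?_⟩
    obtain ⟨hu₁, hu₂⟩ := Finset.mem_inter.1 hu
    rcases hcol u with h | h | h
    · exact hinj _ h₁ hu₁ hx₁ h
    · exact absurd (hinj _ h₂ hu₂ hy₂ h ▸ hu₁) hy₁
    · exact absurd (hinj _ h₁ hu₁ hz₁ h ▸ hu₂) hz₂
  have e₂₃ : e₂ ∩ e₃ = {y} := by
    refine Finset.eq_singleton_iff_unique_mem.2 ⟨by simp [hy₂, hy₃], fun u hu => ?_⟩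
    obtain ⟨hu₂, hu₃⟩ := Finset.mem_inter.1 hu
    rcases hcol u with h | h | h
    · exact absurd (hinj _ h₂ hu₂ hx₂ h ▸ hu₃) hx₃
    · exact hinj _ h₂ hu₂ hy₂ h
    · exact absurd (hinj _ h₃ hu₃ hz₃ h ▸ hu₂) hz₂
  have e₁₃ : e₁ ∩ e₃ = {z} := by
    refine Finset.eq_singleton_iff_unique_mem.2 ⟨by simp [hz₁, hz₃], fun u hu => ?_⟩
    obtain ⟨hu₁, hu₃⟩ := Finset.mem_inter.1 hu
    rcases hcol u with h | h | h
    · exact absurd (hinj _ h₁ hu₁ hx₁ h ▸ hu₃) hx₃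
    · exact absurd (hinj _ h₃ hu₃ hy₃ h ▸ hu₁) hy₁
    · exact hinj _ h₁ hu₁ hz₁ h
  refine hnobad ⟨e₁, e₂, e₃, h₁, h₂, h₃, fun h => hy₁ (h ▸ hy₂), fun h => hx₃ (h ▸ hx₂),
    fun h => hx₃ (h ▸ hx₁), ?_⟩
  rw [e₁₂, e₂₃, e₁₃]
  simp only [Finset.card_singleton, ne_eq, Finset.singleton_inj, true_and]
  exact ⟨fun h => hcxy (h ▸ rfl), fun h => hcyz (h ▸ rfl), fun h => hcxz (h ▸ rfl)⟩

/-- Helly property: a nonempty subfamily of a 3-partite hypergraph without bad triples whose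
members pairwise meet inside `T` has a common vertex in `T`. -/
lemma exists_common_vertex (hinj : ∀ e ∈ E, Set.InjOn c e)
    (hnobad : ¬ ∃ e₁ e₂ e₃ : Finset V, BadTriple E e₁ e₂ e₃) {F : Finset (Finset V)} (hFE : F ⊆ E)
    (hF : F.Nonempty) {T : Set V} (hpair : ∀ e ∈ F, ∀ f ∈ F, ∃ v ∈ e, v ∈ f ∧ v ∈ T) :
    ∃ v ∈ T, ∀ e ∈ F, v ∈ e := by
  by_contra! hno
  obtain ⟨e, he⟩ := hF
  have hex (i : Fin 3) : ∃ f ∈ F, ∀ v ∈ e, v ∈ T → c v = i → v ∉ f := by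
    by_cases h : ∃ v ∈ e, v ∈ T ∧ c v = i
    · obtain ⟨v, hve, hvT, hvi⟩ := h
      obtain ⟨f, hf, hvf⟩ := hno v hvT
      refine ⟨f, hf, fun u hu _ hui => ?_⟩
      rwa [hinj e (hFE he) hu hve (hui.trans hvi.symm)]
    · exact ⟨e, he, fun v hv hvT hvi => absurd ⟨v, hv, hvT, hvi⟩ h⟩
  choose f hfF hf using hex
  have htriple : ∀ e₁ ∈ F, ∀ e₂ ∈ F, ∀ e₃ ∈ F, ∃ v ∈ e₁, v ∈ e₂ ∧ v ∈ e₃ ∧ v ∈ T :=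
    fun e₁ h₁ e₂ h₂ e₃ h₃ => exists_common_of_pairwise hinj hnobad (hFE h₁) (hFE h₂) (hFE h₃)
      (hpair _ h₁ _ h₂) (hpair _ h₂ _ h₃) (hpair _ h₁ _ h₃)
  have hnone (v : V) (hve : v ∈ e) (hvT : v ∈ T) (h₀ : v ∈ f 0) (h₁ : v ∈ f 1) (h₂ : v ∈ f 2) :
      False := by
    have := hf (c v) v hve hvT rfl
    generalize c v = i at this
    fin_cases i <;> contradiction
  obtain ⟨w, hw₀, hw₁, hw₂, hwT⟩ := htriple _ (hfF 0) _ (hfF 1) _ (hfF 2)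
  obtain ⟨x, hxe, hx₁, hx₂, hxT⟩ := htriple _ he _ (hfF 1) _ (hfF 2)
  obtain ⟨y, hye, hy₀, hy₂, hyT⟩ := htriple _ he _ (hfF 0) _ (hfF 2)
  obtain ⟨z, hze, hz₀, hz₁, hzT⟩ := htriple _ he _ (hfF 0) _ (hfF 1)
  have hE (i : Fin 3) := hinj _ (hFE (hfF i))
  have hee := hinj _ (hFE he)
  have hwx : c w ≠ c x := fun h => by
    obtain rfl := hE 1 hw₁ hx₁ h
    exact hnone w hxe hwT hw₀ hw₁ hw₂
  have hwy : c w ≠ c y := fun h => by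
    obtain rfl := hE 0 hw₀ hy₀ h
    exact hnone w hye hwT hw₀ hw₁ hw₂
  have hwz : c w ≠ c z := fun h => by
    obtain rfl := hE 0 hw₀ hz₀ h
    exact hnone w hze hwT hw₀ hw₁ hw₂
  have hxy : c x ≠ c y := fun h => by
    obtain rfl := hee hxe hye h
    exact hnone x hxe hxT hy₀ hx₁ hx₂
  have hxz : c x ≠ c z := fun h => by
    obtain rfl := hee hxe hze h
    exact hnone x hxe hxT hz₀ hx₁ hx₂
  have hyz : c y ≠ c z := fun h => by
    obtain rfl := hee hye hze h
    exact hnone y hye hyT hy₀ hz₁ hy₂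
  omega

/-- Either the monomial with exponent `a` is divisible by a product of two edges, or some vertex
cover has total exponent at most one. -/
lemma exists_cover_degreeIn_le_one [Fintype V] (hinj : ∀ e ∈ E, Set.InjOn c e)
    (hnobad : ¬ ∃ e₁ e₂ e₃ : Finset V, BadTriple E e₁ e₂ e₃) (a : V →₀ ℕ)
    (ha : ∀ e ∈ E, ∀ f ∈ E,
      ¬ ∀ v, (if v ∈ e then 1 else 0) + (if v ∈ f then 1 else 0) ≤ a v) :
    ∃ C : Finset V, (∀ e ∈ E, ∃ v ∈ e, v ∈ C) ∧ degreeIn C a ≤ 1 := by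
  let Z : Finset V := {v | a v = 0}
  have hZ : ∑ v ∈ Z, a v = 0 := Finset.sum_eq_zero fun v hv => by simpa [Z] using hv
  let F : Finset (Finset V) := {e ∈ E | ∀ v ∈ e, a v ≠ 0}
  have hcov : ∀ e ∈ E, e ∉ F → ∃ v ∈ e, v ∈ Z := by
    intro e he heF
    simpa [F, Z, he] using heF
  rcases F.eq_empty_or_nonempty with hF | hF
  · exact ⟨Z, fun e he => hcov e he (by simp [hF]), by rw [degreeIn, hZ]; exact zero_le_one⟩
  · obtain ⟨v, hv, hvF⟩ := exists_common_vertex hinj hnobad (Finset.filter_subset _ _) hF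
      (T := {v | a v = 1}) (by
        intro e he f hf
        obtain ⟨heE, he⟩ := Finset.mem_filter.1 he
        obtain ⟨hfE, hf⟩ := Finset.mem_filter.1 hf
        by_contra! hno
        refine ha e heE f hfE fun v => ?_
        have h₁ := he v
        have h₂ := hf v
        have h₃ := hno v
        simp only [Set.mem_ofPred_eq] at h₃
        by_cases h : v ∈ e <;> by_cases h' : v ∈ f <;> simp only [h, h', if_true, if_false,
          forall_const] at * <;> omega)
    have hvZ : v ∉ Z := by simp_all [Z]
    refine ⟨insert v Z, fun e he => ?_, ?_⟩
    · by_cases heF : e ∈ F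
      · exact ⟨v, hvF e heF, Finset.mem_insert_self _ _⟩
      · obtain ⟨u, hu, huZ⟩ := hcov e he heF
        exact ⟨u, hu, Finset.mem_insert_of_mem huZ⟩
    · rw [degreeIn, Finset.sum_insert hvZ, hZ, show a v = 1 from hv]

end

/-- if a simple 3-uniform 3-partite hypergraph contains no bad
subhypergraph of length 3, then the second symbolic and ordinary powers of its
edge ideal agree. -/
theorem stmt7 {k V : Type*} [Field k] [Fintype V] [DecidableEq V]
    (E : Finset (Finset V))
    (huniform : ∀ e ∈ E, e.card = 3)
    (Xp : Fin 3 → Finset V)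
    (hdisj : Pairwise fun i j => Disjoint (Xp i) (Xp j))
    (hcover : ∀ v : V, ∃ i, v ∈ Xp i)
    (hpartite : ∀ e ∈ E, ∀ i, (e ∩ Xp i).card = 1)
    (hnobad : ¬ ∃ e₁ e₂ e₃ : Finset V, BadTriple E e₁ e₂ e₃) :
    symbolicPower (edgeIdeal k E) 2 = (edgeIdeal k E) ^ 2 := by
  choose c hc using hcover
  have hinj : ∀ e ∈ E, Set.InjOn c e := by
    intro e he u hu v hv huv
    refine Finset.card_le_one.1 (hpartite e he (c u)).le u ?_ v ?_
    · exact Finset.mem_inter.2 ⟨hu, hc u⟩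
    · exact Finset.mem_inter.2 ⟨hv, huv ▸ hc v⟩
  refine le_antisymm (fun f hf => ?_) (le_sInf ?_)
  · rw [← support_sum_monomial_coeff f]
    refine Ideal.sum_mem _ fun b hb => ?_
    by_contra hmem
    obtain ⟨C, hC, hdeg⟩ := exists_cover_degreeIn_le_one hinj hnobad b
      fun e he f' hf' h => hmem (monomial_mem_edgeIdeal_sq he hf' h _)
    have := le_degreeIn_of_mem_symbolicPower hf hC (mem_support_iff.1 hb)
    omega
  · rintro _ ⟨p, hp, -, rfl⟩
    exact Ideal.le_comap_map
end
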